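/- arXiv:1108.4202 — 9 statements merged into one kernel-verified Lean document; each statement's English description precedes it below -/
import Mathlib

section
/- (Clebsch–Gordan) For integers m ≥ n ≥ 0, there is an isomorphism of sl(2,ℂ)-modules V(m) ⊗ V(n) ≅ ⊕_{i=0}^{n} V(m+n−2i). -/
/-!
The isomorphism is built from right to left. In any finite-dimensional representation, a nonzero
vector `w` of weight `N` killed by `E` gives a homomorphism from `V(N)` sending `v_j` to
`F ^ j w / j!` (`exists_hom_of_highest`, which rests on Mathlib's theory of primitive vectors).
For `0 ≤ i ≤ n` the tensor product `V(m) ⊗ V(n)` contains the explicit highest weight vector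
`hwVec m n i` of weight `m + n - 2i`, so there is a homomorphism
`⊕ i, V(m + n - 2i) → V(m) ⊗ V(n)`. It is injective (`exists_injective_hom`): a nonzero kernel
would contain a nonzero vector killed by the nilpotent operator `E`, that is, a linear relation
between the `hwVec m n i`, which are eigenvectors of `H` with distinct eigenvalues. The
dimensions agree (`sum_dim`), so it is bijective.
-/

noncomputable section

/-- The action of `H` on the standard irreducible `sl(2,ℂ)`-module `V(n)`:
`H · v_i = (n − 2i) v_i` on the basis `v_0, …, v_n`. -/
def Hstd (n : ℕ) : Module.End ℂ (Fin (n+1) → ℂ) :=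
  Matrix.mulVecLin (Matrix.of fun i j : Fin (n+1) =>
    if i = j then ((n : ℂ) - 2 * ((i : ℕ) : ℂ)) else 0)

/-- The action of `E` on `V(n)`: `E · v_j = (n − j + 1) v_{j−1}` (and `E · v_0 = 0`). -/
def Estd (n : ℕ) : Module.End ℂ (Fin (n+1) → ℂ) :=
  Matrix.mulVecLin (Matrix.of fun i j : Fin (n+1) =>
    if (j : ℕ) = (i : ℕ) + 1 then ((n : ℂ) - ((j : ℕ) : ℂ) + 1) else 0)

/-- The action of `F` on `V(n)`: `F · v_j = (j + 1) v_{j+1}` (and `F · v_n = 0`). -/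
def Fstd (n : ℕ) : Module.End ℂ (Fin (n+1) → ℂ) :=
  Matrix.mulVecLin (Matrix.of fun i j : Fin (n+1) =>
    if (i : ℕ) = (j : ℕ) + 1 then (((j : ℕ) : ℂ) + 1) else 0)

/-- A triple of endomorphisms making `V` an `sl(2,ℂ)`-module: the commutation relations
`[H,E] = 2E`, `[H,F] = −2F`, `[E,F] = H` hold. -/
def IsSL2Triple {V : Type*} [AddCommGroup V] [Module ℂ V] (h e f : Module.End ℂ V) : Prop :=
  h * e - e * h = (2 : ℂ) • e ∧ h * f - f * h = (-2 : ℂ) • f ∧ e * f - f * e = h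

/-- A submodule invariant under the given `sl(2,ℂ)`-action. -/
def IsInvariantTriple {V : Type*} [AddCommGroup V] [Module ℂ V] (h e f : Module.End ℂ V)
    (p : Submodule ℂ V) : Prop :=
  ∀ x ∈ p, h x ∈ p ∧ e x ∈ p ∧ f x ∈ p

/-- Irreducibility of the `sl(2,ℂ)`-module structure given by the triple `(h,e,f)`. -/
def IsIrreducibleTriple {V : Type*} [AddCommGroup V] [Module ℂ V]
    (h e f : Module.End ℂ V) : Prop :=
  (∃ x : V, x ≠ 0) ∧ ∀ p : Submodule ℂ V, IsInvariantTriple h e f p → p = ⊥ ∨ p = ⊤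

/-- Isomorphism of `sl(2,ℂ)`-modules presented by triples of endomorphisms. -/
def RepIso {V W : Type*} [AddCommGroup V] [Module ℂ V] [AddCommGroup W] [Module ℂ W]
    (hV eV fV : Module.End ℂ V) (hW eW fW : Module.End ℂ W) : Prop :=
  ∃ T : V ≃ₗ[ℂ] W,
    (∀ x, T (hV x) = hW (T x)) ∧ (∀ x, T (eV x) = eW (T x)) ∧ (∀ x, T (fV x) = fW (T x))

/-- The componentwise action on the direct sum `⊕ i, V(w i)`. -/
def piRepH (ι : Type) (w : ι → ℕ) : Module.End ℂ (∀ i : ι, Fin (w i + 1) → ℂ) :=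
  LinearMap.pi fun i => Hstd (w i) ∘ₗ LinearMap.proj i

def piRepE (ι : Type) (w : ι → ℕ) : Module.End ℂ (∀ i : ι, Fin (w i + 1) → ℂ) :=
  LinearMap.pi fun i => Estd (w i) ∘ₗ LinearMap.proj i

def piRepF (ι : Type) (w : ι → ℕ) : Module.End ℂ (∀ i : ι, Fin (w i + 1) → ℂ) :=
  LinearMap.pi fun i => Fstd (w i) ∘ₗ LinearMap.proj i

/-! ### The standard module `V(N)` -/

/-- The basis vector `v_j` of `V(N)`, extended by `v_j = 0` for `j > N`, so that the formulas for
the action hold for every natural number `j`. -/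
def stdVec (N j : ℕ) : Fin (N + 1) → ℂ := fun i => if (i : ℕ) = j then 1 else 0

lemma Hstd_stdVec (N j : ℕ) : Hstd N (stdVec N j) = ((N : ℂ) - 2 * j) • stdVec N j := by
  ext i
  simp only [Hstd, stdVec, Matrix.mulVecLin_apply, Matrix.mulVec, dotProduct, Matrix.of_apply,
    Pi.smul_apply, smul_eq_mul, ite_mul, zero_mul, Finset.sum_ite_eq, Finset.mem_univ, if_true]
  split_ifs with h <;> simp [h]

lemma Estd_apply_castSucc {N : ℕ} (x : Fin (N + 1) → ℂ) (k : ℕ) (hk : k < N) :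
    Estd N x ⟨k, by omega⟩ = ((N : ℂ) - k) * x ⟨k + 1, by omega⟩ := by
  simp only [Estd, Matrix.mulVecLin_apply, Matrix.mulVec, dotProduct, Matrix.of_apply]
  rw [Finset.sum_eq_single ⟨k + 1, by omega⟩]
  · rw [if_pos rfl]
    push_cast
    ring
  · intro b _ hb
    rw [if_neg, zero_mul]
    exact fun h => hb (Fin.ext h)
  · simp

lemma Estd_apply_last {N : ℕ} (x : Fin (N + 1) → ℂ) : Estd N x (Fin.last N) = 0 := by
  simp only [Estd, Matrix.mulVecLin_apply, Matrix.mulVec, dotProduct, Matrix.of_apply]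
  refine Finset.sum_eq_zero fun b _ => ?_
  rw [if_neg, zero_mul]
  have := b.2
  simp only [Fin.val_last]
  omega

lemma Estd_stdVec_succ (N j : ℕ) :
    Estd N (stdVec N (j + 1)) = ((N : ℂ) - j) • stdVec N j := by
  ext ⟨i, hi⟩
  rcases Nat.lt_succ_iff_lt_or_eq.mp hi with h | rfl
  · rw [Estd_apply_castSucc _ _ h]
    by_cases hj : i = j <;> simp [stdVec, hj]
  · have := Estd_apply_last (stdVec i (j + 1))
    simp only [Fin.last] at this
    rw [this]
    by_cases hj : i = j <;> simp [stdVec, hj]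

lemma Estd_stdVec_zero (N : ℕ) : Estd N (stdVec N 0) = 0 := by
  ext ⟨i, hi⟩
  rcases Nat.lt_succ_iff_lt_or_eq.mp hi with h | rfl
  · rw [Estd_apply_castSucc _ _ h]
    simp [stdVec]
  · exact Estd_apply_last (stdVec i 0)

lemma Fstd_stdVec (N j : ℕ) :
    Fstd N (stdVec N j) = ((j : ℂ) + 1) • stdVec N (j + 1) := by
  ext i
  simp only [Fstd, stdVec, Matrix.mulVecLin_apply, Matrix.mulVec, dotProduct, Matrix.of_apply,
    Pi.smul_apply, smul_eq_mul]
  by_cases h : (i : ℕ) = j + 1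
  · rw [Finset.sum_eq_single ⟨j, by omega⟩]
    · simp [h]
    · intro b _ hb
      rw [if_neg (c := (b : ℕ) = j), mul_zero]
      exact fun h => hb (Fin.ext h)
    · simp
  · rw [if_neg h, mul_zero]
    refine Finset.sum_eq_zero fun b _ => ?_
    by_cases hb : (b : ℕ) = j
    · rw [if_neg (by omega), zero_mul]
    · rw [if_neg hb, mul_zero]

lemma stdVec_of_lt {N j : ℕ} (h : N < j) : stdVec N j = 0 := by
  ext i
  simp only [stdVec, Pi.zero_apply]
  rw [if_neg (by omega)]

lemma single_eq_stdVec {N : ℕ} (i : Fin (N + 1)) : Pi.single i (1 : ℂ) = stdVec N i := by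
  ext k
  simp [Pi.single_apply, stdVec, Fin.ext_iff]

lemma stdVec_hom_ext {N : ℕ} {V : Type*} [AddCommGroup V] [Module ℂ V]
    {f g : (Fin (N + 1) → ℂ) →ₗ[ℂ] V} (h : ∀ j ≤ N, f (stdVec N j) = g (stdVec N j)) : f = g := by
  refine LinearMap.pi_ext' fun i => LinearMap.ext_ring ?_
  simpa [single_eq_stdVec] using h i (by omega)

lemma isSL2Triple_std (N : ℕ) : IsSL2Triple (Hstd N) (Estd N) (Fstd N) := by
  refine ⟨stdVec_hom_ext fun j _ => ?_, stdVec_hom_ext fun j _ => ?_, stdVec_hom_ext fun j _ => ?_⟩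
  · cases j with
    | zero => simp [Hstd_stdVec, Estd_stdVec_zero]
    | succ j =>
      simp only [LinearMap.sub_apply, Module.End.mul_apply, LinearMap.smul_apply, Hstd_stdVec,
        Estd_stdVec_succ, map_smul, Nat.cast_succ]
      module
  · simp only [LinearMap.sub_apply, Module.End.mul_apply, LinearMap.smul_apply, Hstd_stdVec,
      Fstd_stdVec, map_smul, Nat.cast_succ]
    module
  · cases j with
    | zero => simp [Hstd_stdVec, Fstd_stdVec, Estd_stdVec_zero, Estd_stdVec_succ]
    | succ j =>
      simp only [LinearMap.sub_apply, Module.End.mul_apply, Hstd_stdVec, Fstd_stdVec,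
        Estd_stdVec_succ, map_smul, Nat.cast_succ]
      module

lemma Estd_pow_stdVec {N : ℕ} (k j : ℕ) (h : j < k) : (Estd N ^ k) (stdVec N j) = 0 := by
  induction k generalizing j with
  | zero => omega
  | succ k ih =>
    rw [pow_succ, Module.End.mul_apply]
    cases j with
    | zero => rw [Estd_stdVec_zero, map_zero]
    | succ j => rw [Estd_stdVec_succ, map_smul, ih j (by omega), smul_zero]

lemma Estd_pow_eq_zero {N k : ℕ} (h : N < k) : Estd N ^ k = 0 :=
  stdVec_hom_ext fun j hj => by simpa using Estd_pow_stdVec k j (by omega)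

/-- In `V(N)` the only vectors killed by `E` are the multiples of `v_0`. -/
lemma eq_smul_of_Estd_eq_zero {N : ℕ} {x : Fin (N + 1) → ℂ} (hx : Estd N x = 0) :
    x = x 0 • stdVec N 0 := by
  ext ⟨i, hi⟩
  cases i with
  | zero => simp [stdVec]
  | succ i =>
    have h := Estd_apply_castSucc x i (by omega)
    rw [hx, Pi.zero_apply, eq_comm, mul_eq_zero, sub_eq_zero, Nat.cast_inj] at h
    rw [h.resolve_left (by omega)]
    simp [stdVec]

/-! ### Highest weight vectors -/

/-- A vector of weight `N` killed by `e` is the image of `v_0` under a homomorphism from `V(N)`,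
namely `v_j ↦ f ^ j w / j!`. Well-definedness is the vanishing of `f ^ (N + 1) w`, which is where
finite-dimensionality enters. -/
lemma exists_hom_of_highest {V : Type*} [AddCommGroup V] [Module ℂ V] [FiniteDimensional ℂ V]
    {h e f : Module.End ℂ V} (ht : IsSL2Triple h e f) {w : V} (hw : w ≠ 0) (N : ℕ)
    (hh : h w = (N : ℂ) • w) (he : e w = 0) :
    ∃ L : (Fin (N + 1) → ℂ) →ₗ[ℂ] V, L (stdVec N 0) = w ∧
      (∀ x, L (Hstd N x) = h (L x)) ∧ (∀ x, L (Estd N x) = e (L x)) ∧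
      (∀ x, L (Fstd N x) = f (L x)) := by
  obtain ⟨h1, h2, h3⟩ := ht
  have key : (f ^ (N + 1)) w = 0 ∧ (∀ j : ℕ, h ((f ^ j) w) = ((N : ℂ) - 2 * j) • (f ^ j) w) ∧
      ∀ j : ℕ, e ((f ^ (j + 1)) w) = ((j + 1) * ((N : ℂ) - j)) • (f ^ j) w := by
    by_cases h0 : h = 0
    -- Mathlib's triples have `h ≠ 0`; if `h = 0`, then `f = 0` and `N = 0`.
    · have hf : f = 0 := by
        rw [h0, zero_mul, mul_zero, sub_zero, eq_comm, smul_eq_zero] at h2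
        exact h2.resolve_left (by norm_num)
      have hN : (N : ℂ) = 0 := by
        rw [h0, LinearMap.zero_apply, eq_comm, smul_eq_zero] at hh
        exact hh.resolve_right hw
      subst hf
      subst h0
      refine ⟨by simp, fun j => ?_, fun j => ?_⟩ <;> cases j <;> simp [hN]
    · let : LieRing (Module.End ℂ V) := LieRing.ofAssociativeRing
      have t : IsSl2Triple h e f :=
        { h_ne_zero := h0
          lie_e_f := h3
          lie_h_e_nsmul := by rw [Ring.lie_def, h1, two_smul, two_nsmul]
          lie_h_f_nsmul := by rw [Ring.lie_def, h2, neg_smul, two_smul, two_nsmul] }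
      have P : t.HasPrimitiveVectorWith w (N : ℂ) := ⟨hw, hh, he⟩
      have a := P.pow_toEnd_f_eq_zero_of_eq_nat rfl
      have b := P.lie_h_pow_toEnd_f
      have c := P.lie_e_pow_succ_toEnd_f
      simp only [LieModule.toEnd_module_end, LieHom.id_apply, Module.End.lie_apply] at a b c
      exact ⟨a, b, c⟩
  obtain ⟨k1, k2, k3⟩ := key
  have hfac : ∀ j : ℕ, ((j + 1).factorial : ℂ) = (j + 1) * j.factorial := fun j => by
    rw [Nat.factorial_succ]; push_cast; ring
  have hfac0 : ∀ j : ℕ, (j.factorial : ℂ) ≠ 0 := fun j => by exact_mod_cast j.factorial_ne_zero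
  have hsucc0 : ∀ j : ℕ, (j : ℂ) + 1 ≠ 0 := fun j => by exact_mod_cast j.succ_ne_zero
  let L : (Fin (N + 1) → ℂ) →ₗ[ℂ] V :=
    Fintype.linearCombination ℂ fun j : Fin (N + 1) =>
      ((j : ℕ).factorial : ℂ)⁻¹ • (f ^ (j : ℕ)) w
  have hL : ∀ j ≤ N + 1, L (stdVec N j) = (j.factorial : ℂ)⁻¹ • (f ^ j) w := by
    intro j hj
    rcases Nat.lt_or_ge j (N + 1) with h | h
    · have := single_eq_stdVec (⟨j, h⟩ : Fin (N + 1))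
      rw [← this]
      simp [L, Fintype.linearCombination_apply_single]
    · obtain rfl : j = N + 1 := by omega
      rw [stdVec_of_lt (by omega), map_zero, k1, smul_zero]
  refine ⟨L, by simp [hL], fun x => ?_, fun x => ?_, fun x => ?_⟩
  · suffices L ∘ₗ Hstd N = h ∘ₗ L from LinearMap.congr_fun this x
    refine stdVec_hom_ext fun j hj => ?_
    rw [LinearMap.comp_apply, LinearMap.comp_apply, Hstd_stdVec, map_smul, hL j (by omega),
      map_smul, k2, smul_comm]
  · suffices L ∘ₗ Estd N = e ∘ₗ L from LinearMap.congr_fun this x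
    refine stdVec_hom_ext fun j hj => ?_
    cases j with
    | zero => simp [Estd_stdVec_zero, hL, he]
    | succ j =>
      rw [LinearMap.comp_apply, LinearMap.comp_apply, Estd_stdVec_succ, map_smul,
        hL j (by omega), hL (j + 1) (by omega), map_smul, k3, smul_smul, smul_smul, hfac]
      congr 1
      have := hfac0 j
      have := hsucc0 j
      field_simp
  · suffices L ∘ₗ Fstd N = f ∘ₗ L from LinearMap.congr_fun this x
    refine stdVec_hom_ext fun j hj => ?_
    rw [LinearMap.comp_apply, LinearMap.comp_apply, Fstd_stdVec, map_smul,
      hL j (by omega), hL (j + 1) (by omega), map_smul, pow_succ', Module.End.mul_apply, smul_smul,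
      hfac]
    congr 1
    have := hfac0 j
    have := hsucc0 j
    field_simp

/-- Highest weight vectors of distinct weights generate independent submodules: the kernel of the
resulting map out of the direct sum is stable under the nilpotent operator `E` and meets the kernel
of `E` only in `0`, the latter being spanned by the highest weight vectors of the summands. -/
lemma exists_injective_hom {V : Type*} [AddCommGroup V] [Module ℂ V] [FiniteDimensional ℂ V]
    {h e f : Module.End ℂ V} (ht : IsSL2Triple h e f) {ι : Type} [Fintype ι] (N : ι → ℕ)
    (hN : Function.Injective N) (w : ι → V) (hw : ∀ i, w i ≠ 0)
    (hh : ∀ i, h (w i) = (N i : ℂ) • w i) (he : ∀ i, e (w i) = 0) :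
    ∃ S : (∀ i, Fin (N i + 1) → ℂ) →ₗ[ℂ] V, Function.Injective S ∧
      (∀ x, S (piRepH ι N x) = h (S x)) ∧ (∀ x, S (piRepE ι N x) = e (S x)) ∧
      (∀ x, S (piRepF ι N x) = f (S x)) := by
  choose L hL0 hLH hLE hLF using fun i => exists_hom_of_highest ht (hw i) (N i) (hh i) (he i)
  let S : (∀ i, Fin (N i + 1) → ℂ) →ₗ[ℂ] V := ∑ i, L i ∘ₗ LinearMap.proj i
  have hS : ∀ x, S x = ∑ i, L i (x i) := fun x => by simp [S]
  have hSE : ∀ x, S (piRepE ι N x) = e (S x) := fun x => by simp [hS, piRepE, hLE]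
  have hind : LinearIndependent ℂ w :=
    Module.End.eigenvectors_linearIndependent' h (fun i => (N i : ℂ))
      (fun i j hij => hN (Nat.cast_injective hij)) w
      fun i => ⟨Module.End.mem_eigenspace_iff.mpr (hh i), hw i⟩
  have hker : ∀ x, piRepE ι N x = 0 → S x = 0 → x = 0 := by
    intro x hx hSx
    have hxi : ∀ i, x i = x i 0 • stdVec (N i) 0 :=
      fun i => eq_smul_of_Estd_eq_zero (congrFun hx i)
    have hsum : ∑ i, x i 0 • w i = 0 := by
      rw [← hSx, hS]
      refine Finset.sum_congr rfl fun i _ => ?_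
      conv_rhs => rw [hxi i]
      rw [map_smul, hL0]
    have h0 := Fintype.linearIndependent_iff.mp hind _ hsum
    funext i
    rw [hxi i, h0 i, zero_smul, Pi.zero_apply]
  have hpow : ∀ k x i, (piRepE ι N ^ k) x i = (Estd (N i) ^ k) (x i) := by
    intro k
    induction k with
    | zero => intro x i; rfl
    | succ k ih =>
      intro x i
      rw [pow_succ', pow_succ', Module.End.mul_apply, Module.End.mul_apply, ← ih]
      rfl
  have hdesc : ∀ k x, (piRepE ι N ^ k) x = 0 → S x = 0 → x = 0 := by
    intro k
    induction k with
    | zero => intro x hx _; exact hx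
    | succ k ih =>
      intro x hx hSx
      rw [pow_succ, Module.End.mul_apply] at hx
      exact hker x (ih _ hx (by rw [hSE, hSx, map_zero])) hSx
  refine ⟨S, ?_, fun x => by simp [hS, piRepH, hLH], hSE, fun x => by simp [hS, piRepF, hLF]⟩
  rw [injective_iff_map_eq_zero]
  refine fun x hx => hdesc (∑ i, N i + 1) x (funext fun i => ?_) hx
  rw [hpow, Estd_pow_eq_zero, LinearMap.zero_apply, Pi.zero_apply]
  exact Nat.lt_succ_of_le (Finset.single_le_sum (fun _ _ => Nat.zero_le _) (Finset.mem_univ i))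

/-! ### The tensor product `V(m) ⊗ V(n)` -/

open TensorProduct in
lemma IsSL2Triple.tensor {V W : Type*} [AddCommGroup V] [Module ℂ V] [AddCommGroup W] [Module ℂ W]
    {h e f : Module.End ℂ V} {h' e' f' : Module.End ℂ W} (ht : IsSL2Triple h e f)
    (ht' : IsSL2Triple h' e' f') :
    IsSL2Triple (LinearMap.rTensor W h + LinearMap.lTensor V h')
      (LinearMap.rTensor W e + LinearMap.lTensor V e')
      (LinearMap.rTensor W f + LinearMap.lTensor V f') := by
  have comm : ∀ (a b c : Module.End ℂ V) (a' b' c' : Module.End ℂ W),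
      a * b - b * a = c → a' * b' - b' * a' = c' →
      (LinearMap.rTensor W a + LinearMap.lTensor V a') *
          (LinearMap.rTensor W b + LinearMap.lTensor V b') -
        (LinearMap.rTensor W b + LinearMap.lTensor V b') *
          (LinearMap.rTensor W a + LinearMap.lTensor V a') =
      LinearMap.rTensor W c + LinearMap.lTensor V c' := by
    rintro a b _ a' b' _ rfl rfl
    refine TensorProduct.ext' fun x y => ?_
    simp only [LinearMap.sub_apply, Module.End.mul_apply, LinearMap.add_apply, map_add,
      LinearMap.rTensor_tmul, LinearMap.lTensor_tmul, sub_tmul, tmul_sub]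
    abel
  obtain ⟨h1, h2, h3⟩ := ht
  obtain ⟨h1', h2', h3'⟩ := ht'
  refine ⟨?_, ?_, comm _ _ _ _ _ _ h3 h3'⟩
  · rw [comm _ _ _ _ _ _ h1 h1', LinearMap.rTensor_smul, LinearMap.lTensor_smul, smul_add]
  · rw [comm _ _ _ _ _ _ h2 h2', LinearMap.rTensor_smul, LinearMap.lTensor_smul, smul_add]

open TensorProduct in
/-- The highest weight vector `∑_{a+b=i} (-1)^a (m-a)! (n-b)! v_a ⊗ v_b` of weight `m + n - 2i` in
`V(m) ⊗ V(n)`, meaningful for `i ≤ min m n`. The coefficients `c a b` solve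
`(m - a) c (a+1) b + (n - b) c a (b+1) = 0` for `a + b + 1 = i`, which says that `E` kills it. -/
def hwVec (m n i : ℕ) : (Fin (m + 1) → ℂ) ⊗[ℂ] (Fin (n + 1) → ℂ) :=
  ∑ p ∈ Finset.HasAntidiagonal.antidiagonal i,
    ((-1 : ℂ) ^ p.1 * (m - p.1).factorial * (n - p.2).factorial) •
      (stdVec m p.1 ⊗ₜ[ℂ] stdVec n p.2)

open TensorProduct in
lemma hwVec_ne_zero {m n i : ℕ} (hi : i ≤ n) : hwVec m n i ≠ 0 := by
  -- The coefficient of `v_0 ⊗ v_i` is `m! (n-i)!`.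
  intro h
  have h' := congrArg ((TensorProduct.lid ℂ ℂ).toLinearMap ∘ₗ TensorProduct.map
    (LinearMap.proj (0 : Fin (m + 1))) (LinearMap.proj (⟨i, by omega⟩ : Fin (n + 1)))) h
  rw [map_zero, hwVec, map_sum, Finset.sum_eq_single (0, i)] at h'
  · simp [stdVec, Nat.factorial_ne_zero] at h'
  · rintro ⟨a, b⟩ hp hne
    rw [Finset.HasAntidiagonal.mem_antidiagonal] at hp
    have ha : 0 ≠ a := by
      rintro rfl
      exact hne (Prod.ext rfl (by simpa using hp))
    simp [stdVec, ha]
  · simp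

lemma H_hwVec (m n i : ℕ) :
    (LinearMap.rTensor (Fin (n+1) → ℂ) (Hstd m) + LinearMap.lTensor (Fin (m+1) → ℂ) (Hstd n))
      (hwVec m n i) = ((m : ℂ) + n - 2 * i) • hwVec m n i := by
  rw [hwVec, map_sum, Finset.smul_sum]
  refine Finset.sum_congr rfl fun p hp => ?_
  rw [Finset.HasAntidiagonal.mem_antidiagonal] at hp
  subst hp
  simp only [map_smul, LinearMap.add_apply, LinearMap.rTensor_tmul, LinearMap.lTensor_tmul,
    Hstd_stdVec, ← TensorProduct.smul_tmul', TensorProduct.tmul_smul]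
  push_cast
  module

lemma E_hwVec {m n i : ℕ} (hin : i ≤ n) (hnm : n ≤ m) :
    (LinearMap.rTensor (Fin (n+1) → ℂ) (Estd m) + LinearMap.lTensor (Fin (m+1) → ℂ) (Estd n))
      (hwVec m n i) = 0 := by
  cases i with
  | zero => simp [hwVec, Estd_stdVec_zero]
  | succ k =>
    rw [LinearMap.add_apply, hwVec, map_sum, map_sum, Finset.Nat.sum_antidiagonal_succ,
      Finset.Nat.sum_antidiagonal_succ']
    simp only [map_smul, LinearMap.rTensor_tmul, LinearMap.lTensor_tmul, Estd_stdVec_zero,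
      Estd_stdVec_succ, TensorProduct.zero_tmul, TensorProduct.tmul_zero, smul_zero, zero_add,
      ← TensorProduct.smul_tmul', TensorProduct.tmul_smul]
    rw [← Finset.sum_add_distrib]
    refine Finset.sum_eq_zero fun p hp => ?_
    rw [Finset.HasAntidiagonal.mem_antidiagonal] at hp
    obtain ⟨a, ha⟩ : ∃ a, m = p.1 + 1 + a := ⟨m - (p.1 + 1), by omega⟩
    obtain ⟨b, hb⟩ : ∃ b, n = p.2 + 1 + b := ⟨n - (p.2 + 1), by omega⟩
    have e1 : m - (p.1 + 1) = a := by omega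
    have e2 : m - p.1 = a + 1 := by omega
    have e3 : n - (p.2 + 1) = b := by omega
    have e4 : n - p.2 = b + 1 := by omega
    have c1 : (m : ℂ) - p.1 = a + 1 := by rw [ha]; push_cast; ring
    have c2 : (n : ℂ) - p.2 = b + 1 := by rw [hb]; push_cast; ring
    rw [e1, e2, e3, e4, c1, c2, smul_smul, smul_smul, ← add_smul, Nat.factorial_succ,
      Nat.factorial_succ]
    convert zero_smul ℂ _
    push_cast
    ring

lemma sum_dim {m n : ℕ} (hmn : n ≤ m) :
    ∑ i : Fin (n + 1), (m + n - 2 * (i : ℕ) + 1) = (m + 1) * (n + 1) := by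
  rw [Fin.sum_univ_eq_sum_range (fun i => m + n - 2 * i + 1)]
  have : ∀ k ≤ n + 1, ((∑ i ∈ Finset.range k, (m + n - 2 * i + 1) : ℕ) : ℤ) =
      k * (m + n + 2 - k) := by
    intro k
    induction k with
    | zero => simp
    | succ k ih =>
      intro hk
      rw [Finset.sum_range_succ, Nat.cast_add, ih (by omega)]
      push_cast [show 2 * k ≤ m + n by omega]
      ring
  have := this (n + 1) le_rfl
  zify at this ⊢
  rw [this]
  ring

/-- Clebsch-Gordan: for `m ≥ n ≥ 0`,
`V(m) ⊗ V(n) ≅ ⊕_{i=0}^{n} V(m+n−2i)` as `sl(2,ℂ)`-modules,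
where `sl(2,ℂ)` acts on the tensor product by `x·(v⊗w) = (x·v)⊗w + v⊗(x·w)`. -/
theorem clebsch_gordan (m n : ℕ) (hmn : n ≤ m) :
    RepIso
      (LinearMap.rTensor (Fin (n+1) → ℂ) (Hstd m) + LinearMap.lTensor (Fin (m+1) → ℂ) (Hstd n))
      (LinearMap.rTensor (Fin (n+1) → ℂ) (Estd m) + LinearMap.lTensor (Fin (m+1) → ℂ) (Estd n))
      (LinearMap.rTensor (Fin (n+1) → ℂ) (Fstd m) + LinearMap.lTensor (Fin (m+1) → ℂ) (Fstd n))
      (piRepH (Fin (n+1)) (fun i => m + n - 2 * (i : ℕ)))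
      (piRepE (Fin (n+1)) (fun i => m + n - 2 * (i : ℕ)))
      (piRepF (Fin (n+1)) (fun i => m + n - 2 * (i : ℕ))) := by
  obtain ⟨S, hinj, hH, hE, hF⟩ := exists_injective_hom
    ((isSL2Triple_std m).tensor (isSL2Triple_std n))
    (fun i : Fin (n + 1) => m + n - 2 * (i : ℕ))
    (fun i j hij => Fin.ext (by simp only at hij; omega)) (fun i => hwVec m n i)
    (fun i => hwVec_ne_zero (by omega))
    (fun i => by
      rw [H_hwVec]
      push_cast [show 2 * (i : ℕ) ≤ m + n by omega]
      rfl)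
    (fun i => E_hwVec (by omega) hmn)
  have hdim : Module.finrank ℂ (∀ i : Fin (n + 1), Fin (m + n - 2 * (i : ℕ) + 1) → ℂ) =
      Module.finrank ℂ (TensorProduct ℂ (Fin (m + 1) → ℂ) (Fin (n + 1) → ℂ)) := by
    simp [Module.finrank_pi_fintype, Module.finrank_tensorProduct, ← sum_dim hmn]
  let T := S.linearEquivOfInjective hinj hdim
  have hT : ∀ x, T x = S x := fun x => rfl
  refine ⟨T.symm, fun x => ?_, fun x => ?_, fun x => ?_⟩ <;>
    rw [LinearEquiv.symm_apply_eq, hT]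
  · rw [hH, ← hT, T.apply_symm_apply]
  · rw [hE, ← hT, T.apply_symm_apply]
  · rw [hF, ← hT, T.apply_symm_apply]
end
end

section
/- The bilinear product [·,·] on M is sl(2,ℂ)-invariant: for every x ∈ sl(2,ℂ) and all u, w ∈ M, x·[u,w] = [x·u, w] + [u, x·w]. Equivalently, the induced map α: Λ²V(6) → V(6), α(u∧w) = [u,w], is a morphism of sl(2,ℂ)-modules. -/
noncomputable section

/-- The 7-dimensional complex vector space `M` with basis
`v₆, v₄, v₂, v₀, v₋₂, v₋₄, v₋₆` (coordinates indexed by `Fin 7` in this order). -/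
abbrev M7 : Type := Fin 7 → ℂ

/-- The 2×2 minor `x_p y_q - x_q y_p`. -/
def dd (x y : M7) (p q : Fin 7) : ℂ := x p * y q - x q * y p

/-- The anticommutative bilinear product `[·,·]` on `M` determined by
`[v₆,v₀] = 20v₆`, `[v₆,v₋₂] = 10v₄`, `[v₆,v₋₄] = 4v₂`, `[v₆,v₋₆] = v₀`,
`[v₄,v₂] = −60v₆`, `[v₄,v₀] = −20v₄`, `[v₄,v₋₄] = 6v₀`, `[v₄,v₋₆] = 4v₋₂`,
`[v₂,v₀] = −20v₂`, `[v₂,v₋₂] = −15v₀`, `[v₂,v₋₆] = 10v₋₄`,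
`[v₀,v₋₂] = −20v₋₂`, `[v₀,v₋₄] = −20v₋₄`, `[v₀,v₋₆] = 20v₋₆`,
`[v₋₂,v₋₄] = −60v₋₆`, all other products of basis vectors `v_p, v_q` with `p > q` being zero. -/
def br (x y : M7) : M7 :=
  ![20 * dd x y 0 3 - 60 * dd x y 1 2,
    10 * dd x y 0 4 - 20 * dd x y 1 3,
    4 * dd x y 0 5 - 20 * dd x y 2 3,
    dd x y 0 6 + 6 * dd x y 1 5 - 15 * dd x y 2 4,
    4 * dd x y 1 6 - 20 * dd x y 3 4,
    10 * dd x y 2 6 - 20 * dd x y 3 5,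
    20 * dd x y 3 6 - 60 * dd x y 4 5]

/-- Action of `H` on `M = V(6)`: `H·v_k = k v_k`. -/
def Hm (x : M7) : M7 := ![6 * x 0, 4 * x 1, 2 * x 2, 0, -2 * x 4, -4 * x 5, -6 * x 6]

/-- Action of `E` on `M = V(6)`: `E·v₆ = 0`, `E·v₄ = 6v₆`, `E·v₂ = 5v₄`, `E·v₀ = 4v₂`,
`E·v₋₂ = 3v₀`, `E·v₋₄ = 2v₋₂`, `E·v₋₆ = v₋₄`. -/
def Em (x : M7) : M7 := ![6 * x 1, 5 * x 2, 4 * x 3, 3 * x 4, 2 * x 5, x 6, 0]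

/-- Action of `F` on `M = V(6)`: `F·v₆ = v₄`, `F·v₄ = 2v₂`, `F·v₂ = 3v₀`, `F·v₀ = 4v₋₂`,
`F·v₋₂ = 5v₋₄`, `F·v₋₄ = 6v₋₆`, `F·v₋₆ = 0`. -/
def Fm (x : M7) : M7 := ![0, x 0, 2 * x 1, 3 * x 2, 4 * x 3, 5 * x 4, 6 * x 5]

/-- The bilinear product `[·,·]` on `M` is `sl(2,ℂ)`-invariant: every
`x = a•E + b•H + c•F ∈ sl(2,ℂ)` acts as a derivation of the product. -/
theorem bracket_is_sl2_invariant (a b c : ℂ) (u w : M7) :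
    a • Em (br u w) + b • Hm (br u w) + c • Fm (br u w)
      = br (a • Em u + b • Hm u + c • Fm u) w + br u (a • Em w + b • Hm w + c • Fm w) := by
  ext i
  fin_cases i <;> simp [br, dd, Hm, Em, Fm] <;> ring

end
end

section
/- The skew-symmetric bilinear map β: M × M → sl(2,ℂ) is sl(2,ℂ)-equivariant with respect to the adjoint action on the target: for every x ∈ sl(2,ℂ) and all u, w ∈ M, [x, β(u,w)] = β(x·u, w) + β(u, x·w). -/
noncomputable section

/-- Coefficient of `E` in `β(x,y)` (here `u₂ = −E`, so e.g. `β(v₆,v₋₄) = 2u₂ = −2E`). -/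
def cE (x y : M7) : ℂ := -2 * dd x y 0 5 + 10 * dd x y 1 4 - 20 * dd x y 2 3

/-- Coefficient of `H` in `β(x,y)` (here `u₀ = H`). -/
def cH (x y : M7) : ℂ := dd x y 0 6 - 4 * dd x y 1 5 + 5 * dd x y 2 4

/-- Coefficient of `F` in `β(x,y)` (here `u₋₂ = F`). -/
def cF (x y : M7) : ℂ := 2 * dd x y 1 6 - 10 * dd x y 2 5 + 20 * dd x y 3 4

/-- The standard basis matrices of `sl(2,ℂ)`. -/
def Ey : Matrix (Fin 2) (Fin 2) ℂ := !![0, 1; 0, 0]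
def Hy : Matrix (Fin 2) (Fin 2) ℂ := !![1, 0; 0, -1]
def Fy : Matrix (Fin 2) (Fin 2) ℂ := !![0, 0; 1, 0]

/-- The skew-symmetric bilinear map `β : M × M → sl(2,ℂ)`. -/
def betaM (x y : M7) : Matrix (Fin 2) (Fin 2) ℂ := cE x y • Ey + cH x y • Hy + cF x y • Fy

/-- `β` is `sl(2,ℂ)`-equivariant with respect to the adjoint action on the target:
for `x = a•E + b•H + c•F ∈ sl(2,ℂ)`, `[x, β(u,w)] = β(x·u, w) + β(u, x·w)`. -/
theorem beta_is_equivariant (a b c : ℂ) (u w : M7) :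
    (a • Ey + b • Hy + c • Fy) * betaM u w - betaM u w * (a • Ey + b • Hy + c • Fy)
      = betaM (a • Em u + b • Hm u + c • Fm u) w
        + betaM u (a • Em w + b • Hm w + c • Fm w) := by
  -- Entrywise, both sides are polynomials in `a`, `b`, `c` and the coordinates of `u` and `w`.
  ext i j
  fin_cases i <;> fin_cases j <;>
    simp [betaM, cE, cH, cF, dd, Em, Hm, Fm, Ey, Hy, Fy] <;>
    ring

end
end

section
/- (Bremner–Hentzel) The algebra M satisfies the defining identities for Malcev algebras: [a,b] + [b,a] = 0 and [[[a,c],b],d] + [[[d,a],c],b] + [[[c,b],d],a] + [[[b,d],a],c] = [[a,b],[c,d]] for all a, b, c, d ∈ M. -/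
noncomputable section

/-- (Bremner–Hentzel) `M` satisfies the defining identities for Malcev algebras. -/
theorem M_is_malcev :
    (∀ a b : M7, br a b + br b a = 0) ∧
    (∀ a b c d : M7,
      br (br (br a c) b) d + br (br (br d a) c) b + br (br (br c b) d) a
        + br (br (br b d) a) c = br (br a b) (br c d)) := by
  refine ⟨fun a b => ?_, fun a b c d => ?_⟩
  · ext i
    fin_cases i <;> simp [br, dd] <;> ring
  · -- Each coordinate is a polynomial identity with integer coefficients in the 28 coordinates
    -- of `a`, `b`, `c`, `d`, so normalization in a commutative ring verifies it.
    ext i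
    fin_cases i <;>
      simp only [br, dd, Pi.add_apply, Fin.isValue, Fin.zero_eta, Fin.mk_one, Fin.reduceFinMk,
        Matrix.cons_val] <;> ring

end
end

section
/- The algebra M is a simple non-Lie algebra: (1) the Jacobi identity fails in M, that is, there exist a, b, c ∈ M with [[a,b],c] + [[b,c],a] + [[c,a],b] ≠ 0; (2) the only ideals of M are {0} and M itself, where an ideal is a linear subspace I ⊆ M such that [x,y] ∈ I for all x ∈ I and y ∈ M. -/
/-!
Right multiplication `R` by `v₀` is diagonal with eigenvalue `0` on the line of `v₀` and `±20` on
two three-dimensional eigenspaces, spanned by `v₆, v₋₂, v₋₄` and by `v₄, v₂, v₋₆`. An ideal is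
`R`-stable, hence contains the eigencomponents of each of its elements. The basis vector
of weight `-q` sends `v_q` to a nonzero multiple of `v₀` and kills the other two vectors of
the eigenspace of `v_q`, so a nonzero ideal contains `v₀` (`coord_smul_v0_mem`). Since `R` is
invertible on the span of the other basis vectors, `v₀` generates `M` as an ideal. The Jacobi
identity fails on `v₄, v₂, v₀`.
-/

noncomputable section

/-- The basis vector with index `i`; in particular `e 3` is `v₀`. -/
def e (i : Fin 7) : M7 := Pi.single i 1

/-- Right multiplication by `v₀` is diagonal, with eigenvalues `20, -20, -20, 0, 20, 20, -20`. -/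
lemma br_v0 (x : M7) :
    br x (e 3) = ![20 * x 0, -20 * x 1, -20 * x 2, 0, 20 * x 4, 20 * x 5, -20 * x 6] := by
  ext k
  fin_cases k <;> simp [br, dd, e]

/-- Every coordinate of an element of an ideal can be transported to the `v₀`-axis: project to
the eigenspaces of multiplication by `v₀`, then multiply by the basis vector of opposite
weight, which annihilates the other two vectors of the eigenspace. The `v₀`-component itself is
what remains after subtracting the two projections. -/
lemma coord_smul_v0_mem (I : Submodule ℂ M7) (hI : ∀ x ∈ I, ∀ y : M7, br x y ∈ I)
    {x : M7} (hx : x ∈ I) (k : Fin 7) : x k • e 3 ∈ I := by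
  have h1 := hI x hx (e 3)
  have h2 := hI _ h1 (e 3)
  -- `(R² + 20 R) / 800` and `(R² - 20 R) / 800` are the projections to the eigenvalues `±20`
  -- of `R = br · v₀`.
  have hp : (![x 0, 0, 0, 0, x 4, x 5, 0] : M7) ∈ I := by
    convert I.smul_mem (1 / 800 : ℂ) (I.add_mem h2 (I.smul_mem (20 : ℂ) h1)) using 1
    ext k
    fin_cases k <;> simp [br_v0] <;> ring
  have hm : (![0, x 1, x 2, 0, 0, 0, x 6] : M7) ∈ I := by
    convert I.smul_mem (1 / 800 : ℂ) (I.sub_mem h2 (I.smul_mem (20 : ℂ) h1)) using 1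
    ext k
    fin_cases k <;> simp [br_v0] <;> ring
  fin_cases k
  · convert hI _ hp (e 6) using 1
    ext k
    fin_cases k <;> simp [br, dd, e]
  · convert I.smul_mem (1 / 6 : ℂ) (hI _ hm (e 5)) using 1
    ext k
    fin_cases k <;> simp [br, dd, e]
  · convert I.smul_mem (-1 / 15 : ℂ) (hI _ hm (e 4)) using 1
    ext k
    fin_cases k <;> simp [br, dd, e] <;> ring
  · convert I.sub_mem hx (I.add_mem hp hm) using 1
    ext k
    fin_cases k <;> simp [e]
  · convert I.smul_mem (1 / 15 : ℂ) (hI _ hp (e 2)) using 1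
    ext k
    fin_cases k <;> simp [br, dd, e]
  · convert I.smul_mem (-1 / 6 : ℂ) (hI _ hp (e 1)) using 1
    ext k
    fin_cases k <;> simp [br, dd, e] <;> ring
  · convert I.smul_mem (-1 : ℂ) (hI _ hm (e 0)) using 1
    ext k
    fin_cases k <;> simp [br, dd, e]

/-- `M` is a simple non-Lie algebra: the Jacobi identity fails, and the only ideals
are `{0}` and `M`. -/
theorem M_is_simple_non_lie :
    (∃ a b c : M7, br (br a b) c + br (br b c) a + br (br c a) b ≠ 0) ∧
    (∀ I : Submodule ℂ M7, (∀ x ∈ I, ∀ y : M7, br x y ∈ I) → I = ⊥ ∨ I = ⊤) := by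
  refine ⟨⟨e 1, e 2, e 3, fun h => ?_⟩, fun I hI => ?_⟩
  -- The Jacobian of `v₄, v₂, v₀` is `-3600 v₆`.
  · have h0 := congrFun h 0
    simp [br, dd, e] at h0
    norm_num at h0
  · refine or_iff_not_imp_left.2 fun hne => ?_
    obtain ⟨x, hx, hx0⟩ := I.ne_bot_iff.1 hne
    obtain ⟨k, hk⟩ := Function.ne_iff.1 hx0
    have hv : e 3 ∈ I := (I.smul_mem_iff hk).1 (coord_smul_v0_mem I hI hx k)
    refine (Submodule.eq_top_iff').2 fun y => ?_
    -- Split off the `v₀`-component of `y`; the rest is a product `[v₀, z]`.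
    convert I.add_mem (I.smul_mem (y 3) hv) (hI _ hv
      ![-y 0 / 20, y 1 / 20, y 2 / 20, 0, -y 4 / 20, -y 5 / 20, y 6 / 20]) using 1
    ext k
    fin_cases k <;> simp [br, dd, e] <;> ring

end
end

section
/- The algebra M satisfies the Filippov h-identity: for all a, b, c, d, e ∈ M (writing xy for [x,y]), (((ab)c)d)e + (((ab)c)e)d − (((ab)d)c)e − (((ab)e)c)d + (((ad)b)e)c − (((ad)e)b)c + (((ae)b)d)c − (((ae)d)b)c + 2((ab)(cd))e + 2((ab)(ce))d + 2((ad)(be))c + 2((ae)(bd))c = 0. -/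
/-!
`M` is a form of the algebra of trace-zero octonions under the commutator. What the proof uses is
that `M` carries a symmetric bilinear form `B` which is associative, `B ([x,y], z) = B (x, [y,z])`,
and satisfies the vector-cross-product identity `[[x,y],y] = B(y,y) x - B(x,y) y`, here in its
linearised form `br_br_add`. The latter allows the last two factors of a left-normed product
to be exchanged, up to a sign and shorter terms.

The left-hand side of the `h`-identity is symmetric and bilinear in `(d, e)`, so it is enough to
treat `d = e = x`; there it is twice an expression in which the terms ending in the factor `x`
add up to `-3 B([a,b],x) [c,x]` (`quad_left`, with `u = [a,b]`), while the bracket multiplied by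
`c` in the remaining terms is `-3 B([a,b],x) x` (`quad_right`). These cancel by anticommutativity.
-/

noncomputable section

/-- The associative symmetric bilinear form on `M`, normalised so that
`[[x,y],y] = B(y,y) x - B(x,y) y`. It pairs `v_q` with `v_{-q}`. -/
def bform (x y : M7) : ℂ :=
  400 * (x 3 * y 3) - 20 * (x 0 * y 6 + x 6 * y 0) + 120 * (x 1 * y 5 + x 5 * y 1)
    - 300 * (x 2 * y 4 + x 4 * y 2)

lemma bform_comm (x y : M7) : bform x y = bform y x := by
  simp only [bform]; ring

lemma bform_br (x y z : M7) : bform (br x y) z = bform x (br y z) := by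
  simp [bform, br, dd]; ring

lemma br_anticomm (x y : M7) : br x y = -br y x := by
  ext i; fin_cases i <;> simp [br, dd] <;> ring

lemma br_add_left (x y z : M7) : br (x + y) z = br x z + br y z := by
  ext i; fin_cases i <;> simp [br, dd] <;> ring

lemma br_smul_left (r : ℂ) (x z : M7) : br (r • x) z = r • br x z := by
  ext i; fin_cases i <;> simp [br, dd] <;> ring

lemma br_add_right (x y z : M7) : br x (y + z) = br x y + br x z := by
  ext i; fin_cases i <;> simp [br, dd] <;> ring

lemma br_neg_left (x z : M7) : br (-x) z = -br x z := by
  simpa using br_smul_left (-1) x z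

lemma br_sub_left (x y z : M7) : br (x - y) z = br x z - br y z := by
  rw [sub_eq_add_neg, br_add_left, br_neg_left, sub_eq_add_neg]

lemma br_self (x : M7) : br x x = 0 := by
  ext i; fin_cases i <;> simp [br, dd] <;> ring

/-- The linearised cross-product identity. -/
lemma br_br_add (x y z : M7) : br (br x y) z + br (br x z) y =
    (2 * bform y z) • x - bform x y • z - bform x z • y := by
  ext i; fin_cases i <;> simp [br, dd, bform] <;> ring

lemma br_br_swap (x y z : M7) : br (br x y) z =
    (2 * bform y z) • x - bform x y • z - bform x z • y - br (br x z) y :=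
  eq_sub_of_add_eq (br_br_add x y z)

lemma br_br_self (x y : M7) : br (br x y) y = bform y y • x - bform x y • y := by
  linear_combination (norm := module) (1 / 2 : ℂ) • br_br_add x y y

lemma bform_br_self (x y : M7) : bform (br x y) y = 0 := by
  rw [bform_br, br_self]; simp [bform]

lemma bform_br_swap (x y z : M7) : bform (br x y) z = -bform (br x z) y := by
  rw [bform_br, bform_br, br_anticomm y z]
  simp [bform]; ring

/-- The part of the quadratic identity in which the last factor is `x`, with `u = [a,b]`. -/
lemma quad_left (u c x : M7) :
    br (br (br u c) x) x - br (br (br u x) c) x + (2 : ℂ) • br (br u (br c x)) x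
      = (-3 * bform u x) • br c x := by
  have h1 := br_br_self (br u c) x
  have h2 := br_br_swap (br u x) c x
  rw [br_br_self u x, br_sub_left, br_smul_left, br_smul_left, bform_br_self] at h2
  have h3 := br_br_swap (br c x) u x
  rw [br_br_self c x, br_sub_left, br_smul_left, br_smul_left, bform_br_self] at h3
  rw [br_anticomm u (br c x), br_neg_left, h1, h2, h3, br_anticomm x c, br_anticomm x u,
    br_anticomm c u, bform_br_swap u x c, bform_comm (br c x) u, ← bform_br u c x]
  module

/-- The part of the quadratic identity in which the last factor is `c`, before multiplying by
`c`. -/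
lemma quad_right (a b x : M7) :
    br (br (br a x) b) x - br (br (br a x) x) b + (2 : ℂ) • br (br a x) (br b x)
      = (-3 * bform (br a b) x) • x := by
  have h1 := br_br_swap (br a x) b x
  rw [br_br_self a x, br_sub_left, br_smul_left, br_smul_left, bform_br_self] at h1
  have h2 := br_br_swap b x (br a x)
  rw [br_anticomm b (br a x), br_br_swap a x b, br_neg_left] at h2
  simp only [br_sub_left, br_smul_left, br_br_self, br_self] at h2
  rw [br_anticomm (br a x) (br b x), h1, h2, br_br_self a x, bform_comm x (br a x),
    bform_br_self, bform_comm b (br a x), bform_br_swap a x b, br_sub_left, br_smul_left,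
    br_smul_left, br_anticomm x b, bform_comm x b]
  module

/-- Half of the `h`-identity at `d = e = x`. -/
lemma filippov_quad (a b c x : M7) :
    br (br (br (br a b) c) x) x - br (br (br (br a b) x) c) x
      + br (br (br (br a x) b) x) c - br (br (br (br a x) x) b) c
      + (2 : ℂ) • br (br (br a b) (br c x)) x + (2 : ℂ) • br (br (br a x) (br b x)) c = 0 := by
  have h1 := quad_left (br a b) c x
  have h2 := congrArg (fun y => br y c) (quad_right a b x)
  simp only [br_add_left, br_sub_left, br_smul_left] at h2
  rw [br_anticomm x c] at h2
  linear_combination (norm := module) h1 + h2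

/-- `M` satisfies the Filippov h-identity. -/
theorem M_satisfies_filippov_h (a b c d e : M7) :
      (br (br (br (br a b) c) d) e) + (br (br (br (br a b) c) e) d)
         - (br (br (br (br a b) d) c) e) - (br (br (br (br a b) e) c) d)
         + (br (br (br (br a d) b) e) c) - (br (br (br (br a d) e) b) c)
         + (br (br (br (br a e) b) d) c) - (br (br (br (br a e) d) b) c)
         + (2 : ℂ) • (br (br (br a b) (br c d)) e) + (2 : ℂ) • (br (br (br a b) (br c e)) d)
         + (2 : ℂ) • (br (br (br a d) (br b e)) c) + (2 : ℂ) • (br (br (br a e) (br b d)) c)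
      = 0 := by
  -- Polarisation: the left-hand side is `Q (d + e) - Q d - Q e` for the quadratic map `Q` in `x`
  -- of `filippov_quad`.
  have h := filippov_quad a b c (d + e)
  simp only [br_add_left, br_add_right, smul_add] at h
  linear_combination (norm := module) h - filippov_quad a b c d - filippov_quad a b c e

end
end

section
/- Let A be a Malcev algebra over a field of characteristic ≠ 2, that is, a vector space with an anticommutative bilinear product (written by juxtaposition) satisfying (((ac)b)d + ((da)c)b + ((cb)d)a + ((bd)a)c = (ab)(cd) for all a, b, c, d. Then A satisfies the identity h(a,b,c,d,e) ≡ 0 if and only if A satisfies the identity k(a,b,c,d,e) ≡ 0, where h(a,b,c,d,e) = (((ab)c)d)e + (((ab)c)e)d − (((ab)d)c)e − (((ab)e)c)d + (((ad)b)e)c − (((ad)e)b)c + (((ae)b)d)c − (((ae)d)b)c + 2((ab)(cd))e + 2((ab)(ce))d + 2((ad)(be))c + 2((ae)(bd))c, and k(a,b,c,d,e) = −(((ab)c)e)d + (((ab)e)d)c + (((ac)b)d)e − (((ac)d)e)b − (((ad)b)c)e − (((ad)c)b)e + (((ae)b)c)d + (((ae)c)b)d + (((bd)c)a)e − (((be)a)d)c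 + (((be)c)d)a − (((be)d)a)c + (((cd)a)e)b − (((cd)b)e)a + (((cd)e)a)b − (((ce)b)a)d + ((ab)c)(de) + ((ac)b)(de). -/
/-!
In degree 5 the multilinear consequences of the Malcev identity are spanned by two kinds of
elements: the identity multiplied by a fifth element (`malcev_mul_right`), and the identity with
one of its arguments replaced by a product of two elements.
Modulo these consequences:

* `h(a,b,c,d,e) = k(a,b,d,e,c) + k(a,b,e,d,c)`, so `k ≡ 0` implies `h ≡ 0`;
* `2 k(a,b,c,d,e) = h(a,b,e,c,d) - h(a,c,d,b,e) - h(d,e,a,b,c) + h(b,c,a,d,e)`,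
  so `h ≡ 0` implies `k ≡ 0` because `2` is invertible.

Each relation is verified by writing out the required Malcev consequences explicitly, bringing every
monomial to a standard form by anticommutativity, and comparing coefficients. All coefficients are
integers, so the only restriction on the characteristic comes from the factor `2` in the second
relation.
-/

/-- The Malcev identity multiplied on the right by a fifth element `e`. -/
lemma malcev_mul_right {K : Type*} [Field K] {A : Type*} [AddCommGroup A] [Module K A]
    {mul : A →ₗ[K] A →ₗ[K] A}
    (hmalcev : ∀ a b c d : A,
      mul (mul (mul a c) b) d + mul (mul (mul d a) c) b + mul (mul (mul c b) d) a
        + mul (mul (mul b d) a) c = mul (mul a b) (mul c d)) (a b c d e : A) :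
    mul (mul (mul (mul a c) b) d) e + mul (mul (mul (mul d a) c) b) e
        + mul (mul (mul (mul c b) d) a) e + mul (mul (mul (mul b d) a) c) e
      = mul (mul (mul a b) (mul c d)) e := by
  simp only [← hmalcev a b c d, map_add, LinearMap.add_apply]

set_option maxHeartbeats 1000000 in
/-- In a Malcev algebra over a field of characteristic ≠ 2, the identity
`h(a,b,c,d,e) ≡ 0` holds iff the identity `k(a,b,c,d,e) ≡ 0` holds. -/
theorem h_identity_iff_k_identity
    {K : Type*} [Field K] (hchar : (2 : K) ≠ 0)
    {A : Type*} [AddCommGroup A] [Module K A]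
    (mul : A →ₗ[K] A →ₗ[K] A)
    (hanti : ∀ a b : A, mul a b + mul b a = 0)
    (hmalcev : ∀ a b c d : A,
      mul (mul (mul a c) b) d + mul (mul (mul d a) c) b + mul (mul (mul c b) d) a
        + mul (mul (mul b d) a) c = mul (mul a b) (mul c d)) :
    (∀ a b c d e : A,
      (mul (mul (mul (mul a b) c) d) e) + (mul (mul (mul (mul a b) c) e) d)
         - (mul (mul (mul (mul a b) d) c) e) - (mul (mul (mul (mul a b) e) c) d)
         + (mul (mul (mul (mul a d) b) e) c) - (mul (mul (mul (mul a d) e) b) c)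
         + (mul (mul (mul (mul a e) b) d) c) - (mul (mul (mul (mul a e) d) b) c)
         + (2 : K) • (mul (mul (mul a b) (mul c d)) e)
         + (2 : K) • (mul (mul (mul a b) (mul c e)) d)
         + (2 : K) • (mul (mul (mul a d) (mul b e)) c)
         + (2 : K) • (mul (mul (mul a e) (mul b d)) c)
      = 0) ↔
    (∀ a b c d e : A,
      - (mul (mul (mul (mul a b) c) e) d) + (mul (mul (mul (mul a b) e) d) c)
         + (mul (mul (mul (mul a c) b) d) e) - (mul (mul (mul (mul a c) d) e) b)
         - (mul (mul (mul (mul a d) b) c) e) - (mul (mul (mul (mul a d) c) b) e)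
         + (mul (mul (mul (mul a e) b) c) d) + (mul (mul (mul (mul a e) c) b) d)
         + (mul (mul (mul (mul b d) c) a) e) - (mul (mul (mul (mul b e) a) d) c)
         + (mul (mul (mul (mul b e) c) d) a) - (mul (mul (mul (mul b e) d) a) c)
         + (mul (mul (mul (mul c d) a) e) b) - (mul (mul (mul (mul c d) b) e) a)
         + (mul (mul (mul (mul c d) e) a) b) - (mul (mul (mul (mul c e) b) a) d)
         + (mul (mul (mul a b) c) (mul d e)) + (mul (mul (mul a c) b) (mul d e))
      = 0) := by
  have hs : ∀ x y : A, mul x y = -mul y x := fun x y => eq_neg_of_add_eq_zero_left (hanti x y)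
  -- `h14` moves a single element to the right of a product; `h22` is applied only to pairs of
  -- products which are out of alphabetical order, so that the rewriting terminates.
  have h14 : ∀ x y z : A, mul x (mul y z) = -mul (mul y z) x := fun x y z => hs _ _
  have h22 : ∀ x y z w : A, mul (mul x y) (mul z w) = -mul (mul z w) (mul x y) :=
    fun x y z w => hs _ _
  constructor
  · intro hh a b c d e
    -- The relation below expresses twice `k(a,b,c,d,e)`.
    refine (smul_eq_zero_iff_right hchar).mp ?_
    linear_combination (norm := skip)
      hh a b e c d
      - hh a c d b e
      - hh d e a b c
      + hh b c a d e
      - malcev_mul_right hmalcev a b c e d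
      - (2 : K) • malcev_mul_right hmalcev a b d c e
      + malcev_mul_right hmalcev a b e c d
      + malcev_mul_right hmalcev a c b d e
      - malcev_mul_right hmalcev a c d b e
      + (2 : K) • malcev_mul_right hmalcev a c e b d
      - hmalcev (mul a b) c d e
      + hmalcev (mul a b) e d c
      + hmalcev (mul a c) b e d
      - hmalcev (mul a c) d e b
      - hmalcev (mul b e) a d c
      + hmalcev (mul b e) c a d
      + hmalcev (mul b e) c d a
      - hmalcev (mul b e) d a c
      + hmalcev (mul c d) a e b
      - hmalcev (mul c d) b a e
      - hmalcev (mul c d) b e a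
      + hmalcev (mul c d) e a b
      + hmalcev (mul d e) b a c
      + hmalcev (mul d e) c a b
    simp only [hs b a, hs c a, hs d a, hs e a, hs c b, hs d b, hs e b, hs d c, hs e c, hs e d, h14 a,
      h14 b, h14 c, h14 d, h14 e, h22 c e a b, h22 d e a b, h22 b d a c, h22 d e a c, h22 b c a d,
      h22 b c a e, h22 c d b e, map_neg, LinearMap.neg_apply, neg_neg]
    module
  · intro hk a b c d e
    linear_combination (norm := skip)
      hk a b d e c
      + hk a b e d c
      - malcev_mul_right hmalcev a b c d e
      - malcev_mul_right hmalcev a b c e d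
      - malcev_mul_right hmalcev a d b e c
      - malcev_mul_right hmalcev a d c b e
      - malcev_mul_right hmalcev a e b d c
      - malcev_mul_right hmalcev a e c b d
      + hmalcev (mul a b) d e c
      + hmalcev (mul a b) e d c
      - hmalcev (mul a d) b c e
      - hmalcev (mul a e) b c d
      - hmalcev (mul b c) d e a
      - hmalcev (mul b c) e d a
    simp only [hs b a, hs d a, hs e a, hs c b, hs d b, hs e b, hs d c, hs e c, hs e d, h14 a, h14 c,
      h14 d, h14 e, h22 c d a b, h22 c e a b, h22 b e a d, h22 b d a e, map_neg, LinearMap.neg_apply,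
      neg_neg]
    module
end

section
/- The trilinear operation (x,y,z) on M is skew-symmetric in its first two arguments, (a,b,c) + (b,a,c) = 0, and satisfies the ternary derivation identity: ((a,b,c),d,e) − ((a,b,d),c,e) − (a,b,(c,d,e)) + (c,d,(a,b,e)) = 0 for all a, b, c, d, e ∈ M. -/
/-!
The map `β(x,y) = cE x y • E + cH x y • H + cF x y • F` is, up to scaling, the projection
`Λ²V(6) → V(2) ≅ sl(2,ℂ)`, hence `sl(2,ℂ)`-equivariant:
`β(D·c, d) + β(c, D·d) = [D, β(c, d)]` for every `D ∈ sl(2,ℂ)`.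
Applying both sides to `e`, with `D = β(a, b)`, gives the derivation identity, because
`(a,b,·)` is the action of `D` and `β` is skew. Equivariance is checked on the generators `E`, `H`, `F`
(lemmas `cE_Em`, …, `cF_Fm`, where skewness is used to write `β(c, D·d)` as `-β(D·d, c)`); the bracket relations on `M` (`Em_Fm`, `Hm_Em`, `Hm_Fm`)
convert brackets in `sl(2,ℂ)` to commutators of operators.
-/

noncomputable section

/-- The trilinear operation `(x,y,z) = β(x,y)·z`, where `β(x,y) = cE x y • E + cH x y • H + cF x y • F ∈ sl(2,ℂ)`
acts on `z ∈ M` via the `sl(2,ℂ)`-action `Em, Hm, Fm`. -/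
def tri (x y z : M7) : M7 := cE x y • Em z + cH x y • Hm z + cF x y • Fm z

theorem cE_swap (x y : M7) : cE y x = -cE x y := by
  simp only [cE, dd]; ring

theorem cE_comb (r s t : ℂ) (x y z w : M7) :
    cE (r • x + s • y + t • z) w = r * cE x w + s * cE y w + t * cE z w := by
  simp only [cE, dd, Pi.add_apply, Pi.smul_apply, smul_eq_mul]; ring

theorem cH_swap (x y : M7) : cH y x = -cH x y := by
  simp only [cH, dd]; ring

theorem cH_comb (r s t : ℂ) (x y z w : M7) :
    cH (r • x + s • y + t • z) w = r * cH x w + s * cH y w + t * cH z w := by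
  simp only [cH, dd, Pi.add_apply, Pi.smul_apply, smul_eq_mul]; ring

theorem cF_swap (x y : M7) : cF y x = -cF x y := by
  simp only [cF, dd]; ring

theorem cF_comb (r s t : ℂ) (x y z w : M7) :
    cF (r • x + s • y + t • z) w = r * cF x w + s * cF y w + t * cF z w := by
  simp only [cF, dd, Pi.add_apply, Pi.smul_apply, smul_eq_mul]; ring

theorem Em_comb (r s t : ℂ) (x y z : M7) :
    Em (r • x + s • y + t • z) = r • Em x + s • Em y + t • Em z := by
  ext i; fin_cases i <;> simp [Em] <;> ring

theorem Hm_comb (r s t : ℂ) (x y z : M7) :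
    Hm (r • x + s • y + t • z) = r • Hm x + s • Hm y + t • Hm z := by
  ext i; fin_cases i <;> simp [Hm] <;> ring

theorem Fm_comb (r s t : ℂ) (x y z : M7) :
    Fm (r • x + s • y + t • z) = r • Fm x + s • Fm y + t • Fm z := by
  ext i; fin_cases i <;> simp [Fm] <;> ring

/-- `[E, F] = H` on `M`. -/
theorem Em_Fm (x : M7) : Em (Fm x) = Fm (Em x) + Hm x := by
  ext i; fin_cases i <;> simp [Em, Fm, Hm] <;> ring

/-- `[H, E] = 2E` on `M`. -/
theorem Hm_Em (x : M7) : Hm (Em x) = Em (Hm x) + (2 : ℂ) • Em x := by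
  ext i; fin_cases i <;> simp [Em, Hm] <;> ring

/-- `[H, F] = -2F` on `M`. -/
theorem Hm_Fm (x : M7) : Hm (Fm x) = Fm (Hm x) - (2 : ℂ) • Fm x := by
  ext i; fin_cases i <;> simp [Fm, Hm] <;> ring

/-- Together with the next two lemmas: `β` is equivariant under `E`, where
`[E, eE + hH + fF] = -2h E + f H`. -/
theorem cE_Em (x y : M7) : cE (Em x) y - cE (Em y) x = -2 * cH x y := by
  simp [cE, cH, dd, Em]; ring

theorem cH_Em (x y : M7) : cH (Em x) y - cH (Em y) x = cF x y := by
  simp [cH, cF, dd, Em]; ring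

theorem cF_Em (x y : M7) : cF (Em x) y - cF (Em y) x = 0 := by
  simp [cF, dd, Em]; ring

/-- Together with the next two lemmas: `β` is equivariant under `H`, where
`[H, eE + hH + fF] = 2e E - 2f F`. -/
theorem cE_Hm (x y : M7) : cE (Hm x) y - cE (Hm y) x = 2 * cE x y := by
  simp [cE, dd, Hm]; ring

theorem cH_Hm (x y : M7) : cH (Hm x) y - cH (Hm y) x = 0 := by
  simp [cH, dd, Hm]; ring

theorem cF_Hm (x y : M7) : cF (Hm x) y - cF (Hm y) x = -2 * cF x y := by
  simp [cF, dd, Hm]; ring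

/-- Together with the next two lemmas: `β` is equivariant under `F`, where
`[F, eE + hH + fF] = -e H + 2h F`. -/
theorem cE_Fm (x y : M7) : cE (Fm x) y - cE (Fm y) x = 0 := by
  simp [cE, dd, Fm]; ring

theorem cH_Fm (x y : M7) : cH (Fm x) y - cH (Fm y) x = -cE x y := by
  simp [cE, cH, dd, Fm]; ring

theorem cF_Fm (x y : M7) : cF (Fm x) y - cF (Fm y) x = 2 * cH x y := by
  simp [cH, cF, dd, Fm]; ring

/-- Equivariance of `β` for `D = β(a, b)`, `E`-component. -/
theorem cE_tri (a b c d : M7) : cE (tri a b c) d - cE (tri a b d) c =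
    2 * cH a b * cE c d - 2 * cE a b * cH c d := by
  simp only [tri, cE_comb]
  linear_combination cE a b * cE_Em c d + cH a b * cE_Hm c d + cF a b * cE_Fm c d

/-- Equivariance of `β` for `D = β(a, b)`, `H`-component. -/
theorem cH_tri (a b c d : M7) : cH (tri a b c) d - cH (tri a b d) c =
    cE a b * cF c d - cF a b * cE c d := by
  simp only [tri, cH_comb]
  linear_combination cE a b * cH_Em c d + cH a b * cH_Hm c d + cF a b * cH_Fm c d

/-- Equivariance of `β` for `D = β(a, b)`, `F`-component. -/
theorem cF_tri (a b c d : M7) : cF (tri a b c) d - cF (tri a b d) c =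
    2 * cF a b * cH c d - 2 * cH a b * cF c d := by
  simp only [tri, cF_comb]
  linear_combination cE a b * cF_Em c d + cH a b * cF_Hm c d + cF a b * cF_Fm c d

/-- The left-hand side is the commutator of the operators `β(a, b)` and `β(c, d)` on `M`; the right-hand
side is the action of their bracket in `sl(2,ℂ)`. -/
theorem tri_commutator (a b c d e : M7) :
    tri a b (tri c d e) - tri c d (tri a b e) =
      (2 * cH a b * cE c d - 2 * cE a b * cH c d) • Em e +
      (cE a b * cF c d - cF a b * cE c d) • Hm e +
      (2 * cF a b * cH c d - 2 * cH a b * cF c d) • Fm e := by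
  simp only [tri, Em_comb, Hm_comb, Fm_comb, Em_Fm, Hm_Em, Hm_Fm]
  module

/-- The trilinear operation `(x,y,z) = β(x,y)·z` is skew-symmetric in its first two
arguments and satisfies the ternary derivation identity. -/
theorem tri_skew_and_derivation :
    (∀ a b c : M7, tri a b c + tri b a c = 0) ∧
    (∀ a b c d e : M7,
      tri (tri a b c) d e - tri (tri a b d) c e - tri a b (tri c d e)
        + tri c d (tri a b e) = 0) := by
  refine ⟨fun a b c => ?_, fun a b c d e => ?_⟩
  · simp only [tri, cE_swap a b, cH_swap a b, cF_swap a b]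
    module
  · have h := tri_commutator a b c d e
    rw [← cE_tri, ← cH_tri, ← cF_tri] at h
    -- Unfold only the outer operation in the first two terms, so that they match `h`.
    have h₁ : tri (tri a b c) d e - tri (tri a b d) c e =
        tri a b (tri c d e) - tri c d (tri a b e) := by
      rw [h, tri.eq_1 (tri a b c) d e, tri.eq_1 (tri a b d) c e]
      module
    rw [h₁]
    abel

end
end

section
/- For scalars λ₁, λ₂, λ₃, μ₁, μ₂, μ₃ ∈ ℂ, the expression λ₁[[a,b],c] + λ₂[[b,c],a] + λ₃[[c,a],b] + μ₁⟨a,b,c⟩ + μ₂⟨b,c,a⟩ + μ₃⟨c,a,b⟩ vanishes for all a, b, c ∈ M if and only if λ₁ = λ₂ = λ₃ = μ₁ = μ₂ = μ₃. In particular, the mixed Jacobi identity [[a,b],c] + [[b,c],a] + [[c,a],b] + ⟨a,b,c⟩ + ⟨b,c,a⟩ + ⟨c,a,b⟩ = 0 holds on M, and it spans the space of all such identities in degree 3. -/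
/-!
The mixed Jacobi identity is a polynomial identity in the coordinates of `a, b, c`, verified in each
of the seven components by `ring` (`mixed_jacobi`). It makes the equality of all six scalars
sufficient.

For necessity, the degree 3 expression is evaluated at suitable triples of basis vectors. Some
triples have a component in which only the difference of two scalars survives: `(v₆, v₀, v₀)` and
`(v₆, v₀, v₋₆)` give `λ₁ = λ₃` and `λ₁ = λ₂`, while `(v₄, v₄, v₋₂)` and `(v₄, v₋₂, v₄)` give
`μ₂ = μ₃` and `μ₁ = μ₂`. Finally `(v₆, v₀, v₋₂)` gives `λ₁ + λ₂ + λ₃ = 3μ₂`, which links the two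
families.
-/

noncomputable section

/-- The rescaled trilinear product `⟨x,y,z⟩ = −30·(x,y,z)`. -/
def lyt (x y z : M7) : M7 := (-30 : ℂ) • tri x y z

theorem mixed_jacobi (a b c : M7) :
    br (br a b) c + br (br b c) a + br (br c a) b
      + lyt a b c + lyt b c a + lyt c a b = 0 := by
  funext i
  fin_cases i <;>
    simp [br, lyt, tri, cE, cH, cF, Em, Hm, Fm, dd] <;> ring

/-- The linear combination `λ₁[[a,b],c] + λ₂[[b,c],a] + λ₃[[c,a],b] + μ₁⟨a,b,c⟩ +
μ₂⟨b,c,a⟩ + μ₃⟨c,a,b⟩` vanishes identically on `M` iff `λ₁ = λ₂ = λ₃ = μ₁ = μ₂ = μ₃`.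
In particular the mixed Jacobi identity holds on `M`. -/
theorem mixed_jacobi_spans_degree3_identities :
    (∀ l₁ l₂ l₃ m₁ m₂ m₃ : ℂ,
      (∀ a b c : M7,
        l₁ • br (br a b) c + l₂ • br (br b c) a + l₃ • br (br c a) b
          + m₁ • lyt a b c + m₂ • lyt b c a + m₃ • lyt c a b = 0)
        ↔ (l₁ = l₂ ∧ l₂ = l₃ ∧ l₃ = m₁ ∧ m₁ = m₂ ∧ m₂ = m₃)) ∧
    (∀ a b c : M7,
      br (br a b) c + br (br b c) a + br (br c a) b
        + lyt a b c + lyt b c a + lyt c a b = 0) := by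
  refine ⟨fun l₁ l₂ l₃ m₁ m₂ m₃ => ⟨fun h => ?_, ?_⟩, mixed_jacobi⟩
  · -- In each triple the last argument of `congrFun` picks the component of the weight of the triple,
    -- the only one that can be nonzero.
    have h₁ := congrFun (h ![1, 0, 0, 0, 0, 0, 0] ![0, 0, 0, 1, 0, 0, 0] ![0, 0, 0, 1, 0, 0, 0]) 0
    have h₂ := congrFun (h ![1, 0, 0, 0, 0, 0, 0] ![0, 0, 0, 1, 0, 0, 0] ![0, 0, 0, 0, 0, 0, 1]) 3
    have h₃ := congrFun (h ![0, 1, 0, 0, 0, 0, 0] ![0, 1, 0, 0, 0, 0, 0] ![0, 0, 0, 0, 1, 0, 0]) 0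
    have h₄ := congrFun (h ![0, 1, 0, 0, 0, 0, 0] ![0, 0, 0, 0, 1, 0, 0] ![0, 1, 0, 0, 0, 0, 0]) 0
    have h₅ := congrFun (h ![1, 0, 0, 0, 0, 0, 0] ![0, 0, 0, 1, 0, 0, 0] ![0, 0, 0, 0, 1, 0, 0]) 1
    simp [br, lyt, tri, cE, cH, cF, Em, Hm, Fm, dd] at h₁ h₂ h₃ h₄ h₅
    have e₁₃ : l₁ = l₃ := by linear_combination h₁ / 400
    have e₁₂ : l₁ = l₂ := by linear_combination h₂ / 20
    have f₂₃ : m₂ = m₃ := by linear_combination -h₃ / 1800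
    have f₁₂ : m₁ = m₂ := by linear_combination -h₄ / 1800
    have g : l₁ + l₂ + l₃ = 3 * m₂ := by linear_combination h₅ / 200
    refine ⟨e₁₂, e₁₂.symm.trans e₁₃, ?_, f₁₂, f₂₃⟩
    linear_combination g / 3 - (e₁₃ - e₁₂) / 3 - e₁₃ / 3 - f₁₂
  · rintro ⟨rfl, rfl, rfl, rfl, rfl⟩ a b c
    simp only [← smul_add, mixed_jacobi, smul_zero]

end
end
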